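/- Let α > 0 and β > 0. There exists a continuously differentiable function f = (f₁, f₂) : (−∞, 0] → ℝ² with f(0) = (3β/2, 3β²/(8α)) and f'(t) = Z̃_{α,β}(f(t)) for all t ≤ 0, such that f₂(t) < 3β²/(8α) for every t < 0 and f(t) → (0,0) as t → −∞. That is, the orbit of the sliding vector field of Z_{α,β} through the fold point (3β/2, 3β²/(8α)) converges backward in time to the pseudo-equilibrium (0,0), remaining in the sliding region Σˢ for all negative times. -/

import Mathlib

/-!
In the coordinates `x = (3β/2) u`, `y = (3β²/(8α)) v` and the time `(α/(3β)) t`, the sliding field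
becomes the parameter-free field `(-2v, 12u + v - 9v²) / (2 - v)`, the fold point becomes `(1, 1)`
and the sliding region becomes `v < 1`.

Write `r = u + 1/9` and `H = exp (-9u) (v² - (4/3) r)` (`energy 0`). Dropping the term `v` from
`12u + v - 9v²` makes `H` a first integral; with it, `H' = 2 v² exp (-9u) / (2 - v) ≥ 0`, so `H`
decreases backward in time. Since `H (1, 1) < 0`, the set `H ≤ H (1, 1)` is bounded
(`bounds_of_energy_le`), and it contains the backward orbit of `(1, 1)`.

The level set of `H` through `(1, 1)` leaves the strip `v < 1`, so a second barrier is needed. It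
is `exp (-9u) (v² - (4/3) r + r²/15)` (`energy (1/15)`), negative at `(1, 1)`, and with positive
derivative along the flow wherever it vanishes in the bounded set above (`barrier_deriv_pos`);
hence it stays negative backward in time. If the backward orbit first returned to `v = 1`, then
`v' ≤ 0` there would give `u ≤ 2/3`, which contradicts the negativity of the barrier
(`orbit_stays`).

Finally `W = H + 4/27 + ε u v`, with `ε` small, is comparable to `u² + v²` and satisfies `W' ≥ λ W`
with `λ > 0`, so it decays exponentially backward in time (`orbit_tendsto`). Existence for all
negative times is obtained by freezing the field outside a box containing the orbit, which makes it
bounded and globally Lipschitz (`exists_cutoff_solution`).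
-/

open Set Metric Filter Topology
open scoped NNReal

/-! ### Global existence for a truncated field -/

/-- A bounded, globally Lipschitz autonomous field has global solutions: Picard–Lindelöf applies on
each interval `[-(n + 1), n + 1]`, and the pieces agree by uniqueness. -/
theorem exists_global_solution {E : Type*} [NormedAddCommGroup E] [NormedSpace ℝ E]
    [CompleteSpace E] (V : E → E) (K L : ℝ≥0) (hK : LipschitzWith K V) (hL : ∀ x, ‖V x‖ ≤ L)
    (x₀ : E) : ∃ g : ℝ → E, g 0 = x₀ ∧ ∀ t, HasDerivAt g (V (g t)) t := by
  have hloc : ∀ n : ℕ, ∃ g : ℝ → E, g 0 = x₀ ∧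
      ∀ t ∈ Ioo (-((n : ℝ) + 1)) ((n : ℝ) + 1), HasDerivAt g (V (g t)) t := by
    intro n
    have h0 : (0 : ℝ) ∈ Icc (-((n : ℝ) + 1)) ((n : ℝ) + 1) := by
      constructor <;> linarith [(Nat.cast_nonneg n : (0 : ℝ) ≤ n)]
    have hpl : IsPicardLindelof (fun _ => V) (⟨0, h0⟩ : Icc (-((n : ℝ) + 1)) ((n : ℝ) + 1)) x₀
        (L * ((n : ℝ≥0) + 1)) 0 L K :=
      { lipschitzOnWith := fun _ _ => hK.lipschitzOnWith
        continuousOn := fun _ _ => continuousOn_const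
        norm_le := fun _ _ x _ => hL x
        mul_max_le := by simp }
    obtain ⟨g, hg0, hg⟩ := hpl.exists_eq_forall_mem_Icc_hasDerivWithinAt₀
    exact ⟨g, hg0, fun t ht =>
      (hg t (Ioo_subset_Icc_self ht)).hasDerivAt (Icc_mem_nhds ht.1 ht.2)⟩
  choose g hg0 hg using hloc
  have hagree : ∀ m n : ℕ, m ≤ n → EqOn (g m) (g n) (Ioo (-((m : ℝ) + 1)) ((m : ℝ) + 1)) := by
    intro m n hmn
    have hmn' : (m : ℝ) ≤ n := by exact_mod_cast hmn
    refine ODE_solution_unique_of_mem_Ioo (v := fun _ => V) (s := fun _ => univ) (K := K) (t₀ := 0)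
      (fun _ _ => hK.lipschitzOnWith) ?_ (fun t ht => ⟨hg m t ht, trivial⟩)
      (fun t ht => ⟨hg n t ⟨by linarith [ht.1], by linarith [ht.2]⟩, trivial⟩) (by rw [hg0, hg0])
    constructor <;> linarith [(Nat.cast_nonneg m : (0 : ℝ) ≤ m)]
  refine ⟨fun t => g ⌈|t|⌉₊ t, by simp [hg0], fun t => ?_⟩
  -- Near `t`, the glued function is the single solution of index `⌈|t| + 1⌉₊`.
  have hmem : ∀ s : ℝ, ∀ k : ℕ, |s| ≤ k → s ∈ Ioo (-((k : ℝ) + 1)) ((k : ℝ) + 1) := by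
    intro s k hk
    have := abs_le.1 hk
    constructor <;> linarith
  have heq : ∀ s, |s| ≤ |t| + 1 → g ⌈|s|⌉₊ s = g ⌈|t| + 1⌉₊ s := fun s hs =>
    hagree _ _ (Nat.ceil_mono hs) (hmem s _ (Nat.le_ceil _))
  have hd := hg ⌈|t| + 1⌉₊ t (hmem t _ ((by linarith : |t| ≤ |t| + 1).trans (Nat.le_ceil _)))
  simp only [heq t (by linarith)]
  refine hd.congr_of_eventuallyEq ?_
  filter_upwards [Metric.ball_mem_nhds t one_pos] with s hs
  refine heq s ?_
  rw [Metric.mem_ball, Real.dist_eq] at hs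
  have := abs_sub_abs_le_abs_sub s t
  linarith

/-- The sliding vector field in the parameter-free coordinates `(u, v)`. -/
noncomputable def normField (p : ℝ × ℝ) : ℝ × ℝ :=
  (-2 * p.2 / (2 - p.2), (12 * p.1 + p.2 - 9 * p.2 ^ 2) / (2 - p.2))

/-- Composing `normField` with the nearest-point projection onto the box `[-2, 2] × [-3/2, 3/2]`
gives a field with global solutions; these solve the original equation while in the box. -/
theorem exists_cutoff_solution (p₀ : ℝ × ℝ) :
    ∃ g : ℝ → ℝ × ℝ, g 0 = p₀ ∧ Continuous g ∧
      ∀ t, |(g t).1| ≤ 2 → |(g t).2| ≤ 3 / 2 → HasDerivAt g (normField (g t)) t := by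
  set box : Set (ℝ × ℝ) := Icc (-2) 2 ×ˢ Icc (-(3 / 2)) (3 / 2) with hbox
  have hcomp : IsCompact box := isCompact_Icc.prod isCompact_Icc
  have hsm : ∀ p ∈ box, ContDiffAt ℝ 1 normField p := by
    intro p hp
    have hne : 2 - p.2 ≠ 0 := by have := hp.2.2; linarith
    unfold normField
    exact ContDiffAt.prodMk
      ((contDiffAt_const.mul contDiffAt_snd).div (contDiffAt_const.sub contDiffAt_snd) hne)
      ((((contDiffAt_const.mul contDiffAt_fst).add contDiffAt_snd).sub
        (contDiffAt_const.mul (contDiffAt_snd.pow 2))).div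
        (contDiffAt_const.sub contDiffAt_snd) hne)
  have hll : LocallyLipschitzOn box normField := by
    intro p hp
    obtain ⟨K, s, hs, h⟩ := (hsm p hp).exists_lipschitzOnWith
    exact ⟨K, s, mem_nhdsWithin_of_mem_nhds hs, h⟩
  obtain ⟨K, hK⟩ := hll.exists_lipschitzOnWith_of_compact hcomp
  obtain ⟨L, hL⟩ := hcomp.exists_bound_of_continuousOn hK.continuousOn
  have h2 : (-2 : ℝ) ≤ 2 := by norm_num
  have h3 : (-(3 / 2) : ℝ) ≤ 3 / 2 := by norm_num
  set c : ℝ × ℝ → ℝ × ℝ :=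
    fun p => ((projIcc (-2 : ℝ) 2 h2 p.1 : ℝ), (projIcc (-(3 / 2) : ℝ) (3 / 2) h3 p.2 : ℝ)) with hc
  have hcbox : ∀ p, c p ∈ box := fun p => ⟨(projIcc _ _ h2 p.1).2, (projIcc _ _ h3 p.2).2⟩
  have hclip : LipschitzWith 1 c := by
    have h1 : LipschitzWith 1 (fun p : ℝ × ℝ => (projIcc (-2 : ℝ) 2 h2 p.1 : ℝ)) := by
      simpa [Function.comp_def] using (LipschitzWith.subtype_val _).comp
        ((LipschitzWith.projIcc h2).comp (LipschitzWith.prod_fst (α := ℝ) (β := ℝ)))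
    have h1' : LipschitzWith 1 (fun p : ℝ × ℝ => (projIcc (-(3 / 2) : ℝ) (3 / 2) h3 p.2 : ℝ)) := by
      simpa [Function.comp_def] using (LipschitzWith.subtype_val _).comp
        ((LipschitzWith.projIcc h3).comp (LipschitzWith.prod_snd (α := ℝ) (β := ℝ)))
    simpa using h1.prodMk h1'
  have hV : LipschitzWith K (normField ∘ c) := by
    have := hK.comp (hclip.lipschitzOnWith (s := univ)) (fun p _ => hcbox p)
    simpa using lipschitzOnWith_univ.1 this
  obtain ⟨g, hg0, hg⟩ := exists_global_solution (normField ∘ c) K L.toNNReal hV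
    (fun p => (hL _ (hcbox p)).trans (Real.le_coe_toNNReal L)) p₀
  refine ⟨g, hg0, continuous_iff_continuousAt.2 fun t => (hg t).continuousAt, fun t h1 h1' => ?_⟩
  have : c (g t) = g t := by
    simp only [hc]
    rw [projIcc_of_mem h2 (abs_le.1 h1), projIcc_of_mem h3 (abs_le.1 h1')]
  simpa [this] using hg t

/-! ### Energy, barrier and invariance -/

/-- The family `exp (-9u) (v² - (4/3) r + k r²)` with `r = u + 1/9`. The value `k = 0` gives the
energy that increases along the flow, and `k = 1/15` gives the barrier function. -/
noncomputable def energy (k u v : ℝ) : ℝ :=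
  Real.exp (-9 * u) * (v ^ 2 - 4 / 3 * (u + 1 / 9) + k * (u + 1 / 9) ^ 2)

/-- The pair `(u, v)` satisfies the normalized sliding equation at time `t`. -/
def SolvesAt (u v : ℝ → ℝ) (t : ℝ) : Prop :=
  HasDerivAt u (-2 * v t / (2 - v t)) t ∧
    HasDerivAt v ((12 * u t + v t - 9 * v t ^ 2) / (2 - v t)) t

theorem SolvesAt.hasDerivAt_energy {u v : ℝ → ℝ} {t : ℝ} (h : SolvesAt u v t) (hv : v t < 2)
    (k : ℝ) :
    HasDerivAt (fun s => energy k (u s) (v s))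
      (Real.exp (-9 * u t) / (2 - v t) *
        (2 * v t * (v t - k * (2 * (u t + 1 / 9) - 9 * (u t + 1 / 9) ^ 2)))) t := by
  obtain ⟨hu, hv'⟩ := h
  have hr := hu.add_const (1 / 9 : ℝ)
  have hne : 2 - v t ≠ 0 := by linarith
  have := ((hu.const_mul (-9)).exp).mul
    (((hv'.pow 2).sub (hr.const_mul (4 / 3))).add ((hr.pow 2).const_mul k))
  refine (this.congr_deriv ?_)
  simp only [Pi.add_apply, Pi.sub_apply, Pi.pow_apply]
  field_simp
  push_cast
  ring

theorem HasDerivAt.exists_strict_of_pos {g : ℝ → ℝ} {d t : ℝ} (hg : HasDerivAt g d t)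
    (hd : 0 < d) :
    ∃ δ > 0, ∀ s, |s - t| < δ → (t < s → g t < g s) ∧ (s < t → g s < g t) := by
  have hs := (hasDerivAt_iff_tendsto_slope.1 hg).eventually (lt_mem_nhds hd)
  rw [eventually_nhdsWithin_iff, Metric.eventually_nhds_iff] at hs
  obtain ⟨δ, hδ, h⟩ := hs
  refine ⟨δ, hδ, fun s hs => ⟨fun hts => ?_, fun hst => ?_⟩⟩
  · have := h (by rwa [Real.dist_eq]) hts.ne'
    rw [slope_def_field, div_pos_iff_of_pos_right (by linarith)] at this
    linarith
  · have := h (by rwa [Real.dist_eq]) hst.ne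
    rw [slope_def_field] at this
    by_contra hc
    exact absurd this (not_lt.2 (div_nonpos_of_nonneg_of_nonpos (by linarith) (by linarith)))

/-- The sublevel set of the energy at the level of the fold point `(1, 1)` is bounded. -/
theorem bounds_of_energy_le {u v : ℝ} (h : energy 0 u v ≤ energy 0 1 1) :
    0 < u + 1 / 9 ∧ u + 1 / 9 < 4 / 3 ∧ |v| < 4 / 3 := by
  have hkey : v ^ 2 + 13 / 27 * Real.exp (9 * (u - 1)) ≤ 4 / 3 * (u + 1 / 9) := by
    have h1 : Real.exp (9 * u) * energy 0 u v = v ^ 2 - 4 / 3 * (u + 1 / 9) := by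
      unfold energy
      rw [← mul_assoc, ← Real.exp_add]
      ring_nf
      simp [add_comm]
    have h2 : Real.exp (9 * u) * energy 0 1 1 = -(13 / 27) * Real.exp (9 * (u - 1)) := by
      unfold energy
      rw [← mul_assoc, ← Real.exp_add]
      ring_nf
    have := mul_le_mul_of_nonneg_left h (Real.exp_pos (9 * u)).le
    rw [h1, h2] at this
    linarith
  have hpos := Real.exp_pos (9 * (u - 1))
  have hr : u + 1 / 9 < 4 / 3 := by
    by_contra hc
    have := Real.quadratic_le_exp_of_nonneg (x := 9 * (u - 1)) (by linarith)
    nlinarith [sq_nonneg v]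
  refine ⟨by nlinarith [sq_nonneg v], hr, ?_⟩
  exact abs_lt_of_sq_lt_sq (by nlinarith) (by norm_num)

/-- Where `energy (1/15)` vanishes and `r = u + 1/9` is in `(0, 4/3)`, the sign-carrying factor of its
derivative along the flow (see `SolvesAt.hasDerivAt_energy`) is positive. -/
theorem barrier_deriv_pos {r v : ℝ} (hr0 : 0 < r) (hr : r < 4 / 3)
    (h : v ^ 2 - 4 / 3 * r + 1 / 15 * r ^ 2 = 0) :
    0 < 2 * v * (v - 1 / 15 * (2 * r - 9 * r ^ 2)) := by
  have hv : 0 < v ^ 2 := by nlinarith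
  rcases lt_trichotomy v 0 with hneg | rfl | hpos
  · have : v < 1 / 15 * (2 * r - 9 * r ^ 2) := by
      by_contra hc
      have h3 : r ^ 3 < 64 / 27 := by nlinarith [sq_nonneg r, sq_nonneg (r + 4/3)]
      have h1 : -v ≤ 9 / 15 * r ^ 2 := by nlinarith
      have h2 : (-v) ^ 2 ≤ (9 / 15 * r ^ 2) ^ 2 := by gcongr; linarith
      have h4 : (9 / 15 * r ^ 2) ^ 2 = 9 / 25 * r * r ^ 3 := by ring
      rw [h4] at h2
      nlinarith
    nlinarith
  · simp at hv
  · have : 1 / 15 * (2 * r - 9 * r ^ 2) < v := by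
      by_contra hc
      have h1 : v ≤ 2 / 15 * r := by nlinarith
      have h2 : v ^ 2 ≤ (2 / 15 * r) ^ 2 := by gcongr
      nlinarith
    have h5 : 0 < v - 1 / 15 * (2 * r - 9 * r ^ 2) := by linarith
    positivity

theorem energy_le_of_solves {u v : ℝ → ℝ} (hu : Continuous u) (hv : Continuous v) {T : ℝ}
    (hT : T ≤ 0) (hs : ∀ t, T < t → t < 0 → SolvesAt u v t ∧ v t < 1) :
    energy 0 (u T) (v T) ≤ energy 0 (u 0) (v 0) := by
  have hHc : Continuous fun t => energy 0 (u t) (v t) := by unfold energy; fun_prop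
  have hd : ∀ t ∈ interior (Icc T 0), HasDerivAt (fun s => energy 0 (u s) (v s))
      (Real.exp (-9 * u t) / (2 - v t) * (2 * v t ^ 2)) t := by
    intro t ht
    rw [interior_Icc] at ht
    obtain ⟨h1, h2⟩ := hs t ht.1 ht.2
    exact (h1.hasDerivAt_energy (by linarith) 0).congr_deriv (by ring)
  refine monotoneOn_of_deriv_nonneg (convex_Icc T 0) hHc.continuousOn
    (fun t ht => (hd t ht).differentiableAt.differentiableWithinAt) (fun t ht => ?_)
    (left_mem_Icc.2 hT) (right_mem_Icc.2 hT) hT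
  rw [(hd t ht).deriv]
  rw [interior_Icc] at ht
  have h1 : 0 < 2 - v t := by linarith [(hs t ht.1 ht.2).2]
  positivity

/-- The backward orbit of the fold point stays in `v < 1` and strictly inside the box. The proof
considers the last time at which one of the strict inequalities, or the negativity of the barrier,
fails. -/
theorem orbit_stays {u v : ℝ → ℝ} (hu : Continuous u) (hv : Continuous v) (hu0 : u 0 = 1)
    (hv0 : v 0 = 1) (hs : ∀ t, |u t| ≤ 2 → |v t| ≤ 3 / 2 → SolvesAt u v t) :
    ∀ t, t < 0 → v t < 1 ∧ |u t| < 2 ∧ |v t| < 3 / 2 := by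
  have hFc : Continuous fun t => energy (1 / 15) (u t) (v t) := by unfold energy; fun_prop
  -- Just before time `0` all the strict inequalities hold, since `v' (0) = 4`.
  obtain ⟨ε, hε, hgood⟩ : ∃ ε > 0, ∀ t, -ε < t → t < 0 →
      v t < 1 ∧ |u t| < 2 ∧ |v t| < 3 / 2 ∧ energy (1 / 15) (u t) (v t) < 0 := by
    have hd : HasDerivAt v 4 0 := by
      have := (hs 0 (by rw [hu0]; norm_num) (by rw [hv0]; norm_num)).2
      rw [hu0, hv0] at this
      exact this.congr_deriv (by norm_num)
    obtain ⟨δ, hδ, hδ'⟩ := hd.exists_strict_of_pos (by norm_num)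
    have h1 : ∀ᶠ t in 𝓝 (0 : ℝ), |u t| < 2 :=
      hu.abs.continuousAt.eventually_lt continuousAt_const (by rw [hu0]; norm_num)
    have h2 : ∀ᶠ t in 𝓝 (0 : ℝ), |v t| < 3 / 2 :=
      hv.abs.continuousAt.eventually_lt continuousAt_const (by rw [hv0]; norm_num)
    have h3 : ∀ᶠ t in 𝓝 (0 : ℝ), energy (1 / 15) (u t) (v t) < 0 :=
      hFc.continuousAt.eventually_lt continuousAt_const (by
        rw [hu0, hv0]
        exact mul_neg_of_pos_of_neg (Real.exp_pos _) (by norm_num))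
    obtain ⟨η, hη, hη'⟩ := Metric.eventually_nhds_iff.1 (h1.and (h2.and h3))
    refine ⟨min δ η, lt_min hδ hη, fun t ht ht0 => ?_⟩
    have habs : |t - 0| < min δ η := by rw [sub_zero, abs_of_neg ht0]; linarith
    have ha := (hδ' t (habs.trans_le (min_le_left _ _))).2 ht0
    have hb := hη' (by rw [Real.dist_eq]; exact habs.trans_le (min_le_right _ _) : dist t 0 < η)
    exact ⟨hv0 ▸ ha, hb.1, hb.2.1, hb.2.2⟩
  set bad : Set ℝ := {t | t ≤ -ε ∧
    (1 ≤ v t ∨ 2 ≤ |u t| ∨ 3 / 2 ≤ |v t| ∨ 0 ≤ energy (1 / 15) (u t) (v t))} with hbad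
  have hclosed : IsClosed bad :=
    (isClosed_le continuous_id continuous_const).inter
      ((isClosed_le continuous_const hv).union
        ((isClosed_le continuous_const hu.abs).union
          ((isClosed_le continuous_const hv.abs).union (isClosed_le continuous_const hFc))))
  have hempty : bad = ∅ := by
    by_contra hne
    have hbdd : BddAbove bad := ⟨-ε, fun t ht => ht.1⟩
    obtain ⟨hTε, hT⟩ := hclosed.csSup_mem (nonempty_iff_ne_empty.2 hne) hbdd
    have hafter : ∀ t, sSup bad < t → t < 0 →
        v t < 1 ∧ |u t| < 2 ∧ |v t| < 3 / 2 ∧ energy (1 / 15) (u t) (v t) < 0 := by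
      intro t ht ht0
      rcases lt_or_ge (-ε) t with h | h
      · exact hgood t h ht0
      · have hnot : t ∉ bad := notMem_of_csSup_lt ht hbdd
        simp only [hbad, mem_ofPred_eq, not_and, not_or, not_le] at hnot
        exact hnot h
    set T := sSup bad
    have hT0 : T < 0 := by linarith
    -- Non-strict versions hold at the last bad time by continuity.
    have hlim : ∀ φ : ℝ → ℝ, Continuous φ → ∀ c, (∀ t, T < t → t < 0 → φ t < c) → φ T ≤ c := by
      intro φ hφ c h
      refine le_of_tendsto (hφ.continuousWithinAt (s := Ioi T) (x := T)) ?_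
      filter_upwards [Ioo_mem_nhdsGT hT0] with t ht using (h t ht.1 ht.2).le
    have hvT := hlim v hv 1 fun t h h' => (hafter t h h').1
    have huT := hlim _ hu.abs 2 fun t h h' => (hafter t h h').2.1
    have hvT' := hlim _ hv.abs (3 / 2) fun t h h' => (hafter t h h').2.2.1
    have hFT := hlim _ hFc 0 fun t h h' => (hafter t h h').2.2.2
    have hsol : ∀ t, T ≤ t → t < 0 → SolvesAt u v t := by
      intro t ht ht0
      rcases ht.eq_or_lt with rfl | ht
      · exact hs _ huT hvT'
      · exact hs t (hafter t ht ht0).2.1.le (hafter t ht ht0).2.2.1.le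
    have hH : energy 0 (u T) (v T) ≤ energy 0 (u 0) (v 0) :=
      energy_le_of_solves hu hv hT0.le fun t h h' => ⟨hsol t h.le h', (hafter t h h').1⟩
    rw [hu0, hv0] at hH
    obtain ⟨hr0, hr, hvb⟩ := bounds_of_energy_le hH
    -- A function that is below its value at `T` immediately afterwards has no positive
    -- derivative at `T`.
    have hnot : ∀ φ : ℝ → ℝ, ∀ d, HasDerivAt φ d T →
        (∀ t, T < t → t < 0 → φ t < φ T) → d ≤ 0 := by
      intro φ d hφ h
      by_contra hd
      obtain ⟨δ, hδ, hδ'⟩ := hφ.exists_strict_of_pos (not_le.1 hd)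
      obtain ⟨s, hs1, hs2⟩ := exists_between (lt_min hT0 (by linarith : T < T + δ))
      have hs3 := hs2.trans_le (min_le_left _ _)
      have hs4 := hs2.trans_le (min_le_right _ _)
      have := (hδ' s (by rw [abs_of_pos (by linarith)]; linarith)).1 hs1
      linarith [h s hs1 hs3]
    have hF : energy (1 / 15) (u T) (v T) < 0 := by
      by_contra hF0
      have hF0 : energy (1 / 15) (u T) (v T) = 0 := le_antisymm hFT (not_lt.1 hF0)
      have hle := hnot _ _ ((hsol T le_rfl hT0).hasDerivAt_energy (by linarith) (1 / 15))
        fun t h h' => by rw [hF0]; exact (hafter t h h').2.2.2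
      have hpos := barrier_deriv_pos hr0 hr
        ((mul_eq_zero.1 hF0).resolve_left (Real.exp_pos _).ne')
      have h1 : 0 < 2 - v T := by linarith
      have : 0 < Real.exp (-9 * u T) / (2 - v T) := by positivity
      exact absurd hle (not_le.2 (mul_pos this hpos))
    have hv1 : v T < 1 := by
      by_contra hc
      have hc : v T = 1 := le_antisymm hvT (not_lt.1 hc)
      have hle := hnot _ _ (hsol T le_rfl hT0).2 fun t h h' => by
        rw [hc]; exact (hafter t h h').1
      have hB := (pos_iff_neg_of_mul_neg hF).1 (Real.exp_pos _)
      rw [hc] at hle hB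
      have hu23 : u T ≤ 2 / 3 := by
        norm_num at hle
        linarith
      -- At `v = 1`, `u ≤ 2/3`, the barrier is at least `1 - 1211/1215` times the exponential.
      nlinarith
    rcases hT with h | h | h | h
    · linarith
    · have : |u T| < 2 := abs_lt.2 ⟨by linarith, by linarith⟩
      linarith
    · linarith
    · linarith
  intro t ht
  rcases lt_or_ge (-ε) t with h | h
  · obtain ⟨h1, h2, h3, -⟩ := hgood t h ht
    exact ⟨h1, h2, h3⟩
  · have hnot : t ∉ bad := by simp [hempty]
    simp only [hbad, mem_ofPred_eq, not_and, not_or, not_le] at hnot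
    obtain ⟨h1, h2, h3, -⟩ := hnot h
    exact ⟨h1, h2, h3⟩

/-! ### Convergence to the pseudo-equilibrium -/

/-- The energy has the value `-4/27` at the origin, and its excess over this value is comparable to
`u² + v²` on the bounded set containing the orbit. -/
theorem energy_quadratic_bounds {u v : ℝ} (h0 : 0 < u + 1 / 9) (h1 : u + 1 / 9 < 4 / 3) :
    Real.exp (-11) * (u ^ 2 + v ^ 2) ≤ energy 0 u v + 4 / 27 ∧
      energy 0 u v + 4 / 27 ≤ 12 * (u ^ 2 + v ^ 2) := by
  have hE : energy 0 u v + 4 / 27 = Real.exp (-9 * u) * v ^ 2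
      + 4 / 27 * (1 - (1 + 9 * u) * Real.exp (-9 * u)) := by unfold energy; ring
  have hpos := Real.exp_pos (-9 * u)
  have hinv : Real.exp (-9 * u) * Real.exp (9 * u) = 1 := by
    rw [← Real.exp_add]; ring_nf; exact Real.exp_zero
  rw [hE]
  constructor
  · have hm : Real.exp (-11) ≤ Real.exp (-9 * u) := Real.exp_le_exp.2 (by linarith)
    -- `exp x ≥ (1 + x / 2) ^ 2` for `x ≥ -2`, by squaring `exp (x / 2) ≥ 1 + x / 2`.
    have hsq : (1 + 9 * u / 2) ^ 2 ≤ Real.exp (9 * u) := by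
      have h := Real.add_one_le_exp (9 * u / 2)
      have : Real.exp (9 * u) = Real.exp (9 * u / 2) ^ 2 := by
        rw [← Real.exp_nat_mul]; push_cast; ring_nf
      rw [this]
      have h' : (0 : ℝ) ≤ 1 + 9 * u / 2 := by linarith
      gcongr
      linarith
    have h2 := mul_le_mul_of_nonneg_left hsq hpos.le
    rw [hinv] at h2
    have h3 := mul_le_mul_of_nonneg_right hm (sq_nonneg u)
    have h4 := mul_le_mul_of_nonneg_right hm (sq_nonneg v)
    have h5 : 0 ≤ Real.exp (-9 * u) * u ^ 2 := by positivity
    nlinarith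
  · have h2 : Real.exp (-9 * u) ≤ 3 :=
      (Real.exp_le_exp.2 (by linarith : -9 * u ≤ 1)).trans (by linarith [Real.exp_one_lt_d9])
    have h3 : 1 - 9 * u ≤ Real.exp (-9 * u) := by linarith [Real.add_one_le_exp (-9 * u)]
    have h4 := mul_le_mul_of_nonneg_left h3 (by linarith : 0 ≤ 1 + 9 * u)
    have h5 := mul_le_mul_of_nonneg_right h2 (sq_nonneg v)
    nlinarith [sq_nonneg v]

theorem orbit_tendsto {u v : ℝ → ℝ} (hu : Continuous u) (hv : Continuous v)
    (hs : ∀ t, t < 0 → SolvesAt u v t)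
    (hb : ∀ t, t < 0 → 0 < u t + 1 / 9 ∧ u t + 1 / 9 < 4 / 3 ∧ |v t| < 4 / 3 ∧ v t < 1) :
    Tendsto u atBot (𝓝 0) ∧ Tendsto v atBot (𝓝 0) := by
  obtain ⟨m, hm⟩ : ∃ m, m = Real.exp (-11) := ⟨_, rfl⟩
  have hm0 : 0 < m := hm ▸ Real.exp_pos _
  have hm1 : m ≤ 1 := hm ▸ Real.exp_le_one_iff.2 (by norm_num)
  -- The cross term makes the derivative of `W` control `u²`, which the energy alone does not.
  set W : ℝ → ℝ := fun t => energy 0 (u t) (v t) + 4 / 27 + m / 14 * (u t * v t) with hW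
  have hWc : Continuous W := by simp only [hW]; unfold energy; fun_prop
  have huv : ∀ a b : ℝ, |a * b| ≤ (a ^ 2 + b ^ 2) / 2 := fun a b =>
    abs_le.2 ⟨by nlinarith [sq_nonneg (a + b)], by nlinarith [sq_nonneg (a - b)]⟩
  have hlow : ∀ t, t < 0 → m / 2 * (u t ^ 2 + v t ^ 2) ≤ W t := by
    intro t ht
    obtain ⟨h1, h2, -, -⟩ := hb t ht
    have h3 := (energy_quadratic_bounds (v := v t) h1 h2).1
    rw [← hm] at h3
    have h4 := (abs_le.1 (huv (u t) (v t))).1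
    simp only [hW]
    nlinarith [sq_nonneg (u t), sq_nonneg (v t)]
  have hup : ∀ t, t < 0 → W t ≤ 13 * (u t ^ 2 + v t ^ 2) := by
    intro t ht
    obtain ⟨h1, h2, -, -⟩ := hb t ht
    have h3 := (energy_quadratic_bounds (v := v t) h1 h2).2
    have h4 := (abs_le.1 (huv (u t) (v t))).2
    simp only [hW]
    nlinarith [sq_nonneg (u t), sq_nonneg (v t)]
  have hderiv : ∀ t, t < 0 → ∃ w, HasDerivAt W w t ∧ m / 104 * W t ≤ w := by
    intro t ht
    obtain ⟨h1, h2, h3, h4⟩ := hb t ht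
    have hsol := hs t ht
    refine ⟨_, ((hsol.hasDerivAt_energy (by linarith) 0).add_const (4 / 27)).add
      ((hsol.1.mul hsol.2).const_mul (m / 14)), ?_⟩
    have hpos : 0 < 2 - v t := by linarith
    have hE : m ≤ Real.exp (-9 * u t) := hm ▸ Real.exp_le_exp.2 (by linarith)
    have hEv := mul_le_mul_of_nonneg_right hE (sq_nonneg (v t))
    have hq : m / 2 * (u t ^ 2 + v t ^ 2) ≤ 2 * (Real.exp (-9 * u t) * v t ^ 2)
        + m / 14 * (12 * u t ^ 2 - 2 * v t ^ 2 + u t * v t - 9 * (u t * v t ^ 2)) := by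
      have h5 := (abs_le.1 (huv (u t) (v t))).1
      have h6 : u t * v t ^ 2 ≤ 11 / 9 * v t ^ 2 :=
        mul_le_mul_of_nonneg_right (by linarith) (sq_nonneg _)
      have h7 : 11 * u t ^ 2 - 14 * v t ^ 2 ≤
          12 * u t ^ 2 - 2 * v t ^ 2 + u t * v t - 9 * (u t * v t ^ 2) := by
        nlinarith [sq_nonneg (u t), sq_nonneg (v t)]
      have h8 := mul_le_mul_of_nonneg_left h7 (by positivity : 0 ≤ m / 14)
      have h9 : 0 ≤ m * u t ^ 2 := by positivity
      have h10 : 0 ≤ m * v t ^ 2 := by positivity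
      nlinarith
    have hW1 : m / 104 * W t ≤ m / 8 * (u t ^ 2 + v t ^ 2) := by
      have := mul_le_mul_of_nonneg_left (hup t ht) (by positivity : 0 ≤ m / 104)
      linarith
    refine hW1.trans (le_trans (b := (m / 2 * (u t ^ 2 + v t ^ 2)) / (2 - v t)) ?_
      ((div_le_div_of_nonneg_right hq hpos.le).trans (le_of_eq ?_)))
    · rw [le_div_iff₀ hpos]
      have h11 : 2 - v t ≤ 4 := by linarith [(abs_lt.1 h3).1]
      have := mul_le_mul_of_nonneg_left h11
        (by positivity : 0 ≤ m / 8 * (u t ^ 2 + v t ^ 2))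
      linarith
    · field_simp
      ring
  have hdecay : ∀ t, t ≤ 0 → W t ≤ W 0 * Real.exp (m / 104 * t) := by
    have hmono : MonotoneOn (fun t => W t * Real.exp (-(m / 104 * t))) (Iic 0) := by
      have hd : ∀ t, t < 0 → ∃ w, HasDerivAt (fun t => W t * Real.exp (-(m / 104 * t))) w t ∧
          0 ≤ w := by
        intro t ht
        obtain ⟨w, hw, hle⟩ := hderiv t ht
        refine ⟨_, hw.mul (((hasDerivAt_id t).const_mul (m / 104)).neg.exp), ?_⟩
        have := mul_nonneg (sub_nonneg.2 hle) (Real.exp_pos (-(m / 104 * t))).le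
        simp only [id, Pi.neg_apply]
        linarith
      refine monotoneOn_of_deriv_nonneg (convex_Iic 0) (by fun_prop) ?_ ?_
      · intro t ht
        rw [interior_Iic] at ht
        obtain ⟨w, hw, -⟩ := hd t ht
        exact hw.differentiableAt.differentiableWithinAt
      · intro t ht
        rw [interior_Iic] at ht
        obtain ⟨w, hw, h⟩ := hd t ht
        rwa [hw.deriv]
    intro t ht
    have h := hmono (mem_Iic.2 ht) (mem_Iic.2 le_rfl) ht
    simp only [mul_zero, neg_zero, Real.exp_zero, mul_one] at h
    rwa [Real.exp_neg, ← div_eq_mul_inv, div_le_iff₀ (Real.exp_pos _)] at h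
  have hlim : Tendsto (fun t => Real.sqrt (2 / m * (W 0 * Real.exp (m / 104 * t)))) atBot (𝓝 0) := by
    have h1 : Tendsto (fun t : ℝ => Real.exp (m / 104 * t)) atBot (𝓝 0) :=
      Real.tendsto_exp_atBot.comp (tendsto_id.const_mul_atBot (by positivity))
    simpa using ((h1.const_mul (W 0)).const_mul (2 / m)).sqrt
  have hq : ∀ t, t < 0 → u t ^ 2 + v t ^ 2 ≤ 2 / m * (W 0 * Real.exp (m / 104 * t)) := by
    intro t ht
    have h1 := (hlow t ht).trans (hdecay t ht.le)
    have h2 := mul_le_mul_of_nonneg_left h1 (by positivity : 0 ≤ 2 / m)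
    have h3 : 2 / m * (m / 2 * (u t ^ 2 + v t ^ 2)) = u t ^ 2 + v t ^ 2 := by field_simp
    linarith
  constructor
  · refine squeeze_zero_norm' ?_ hlim
    filter_upwards [eventually_lt_atBot 0] with t ht
    exact Real.abs_le_sqrt (by nlinarith [hq t ht, sq_nonneg (v t)])
  · refine squeeze_zero_norm' ?_ hlim
    filter_upwards [eventually_lt_atBot 0] with t ht
    exact Real.abs_le_sqrt (by nlinarith [hq t ht, sq_nonneg (u t)])

theorem exists_normalized_orbit : ∃ u v : ℝ → ℝ, u 0 = 1 ∧ v 0 = 1 ∧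
    (∀ t, t ≤ 0 → SolvesAt u v t ∧ v t < 2) ∧ (∀ t, t < 0 → v t < 1) ∧
    Tendsto u atBot (𝓝 0) ∧ Tendsto v atBot (𝓝 0) := by
  obtain ⟨g, hg0, hgc, hg⟩ := exists_cutoff_solution (1, 1)
  obtain ⟨u, hu⟩ : ∃ u : ℝ → ℝ, u = fun t => (g t).1 := ⟨_, rfl⟩
  obtain ⟨v, hv⟩ : ∃ v : ℝ → ℝ, v = fun t => (g t).2 := ⟨_, rfl⟩
  have huc : Continuous u := hu ▸ hgc.fst
  have hvc : Continuous v := hv ▸ hgc.snd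
  have hu0 : u 0 = 1 := by simp [hu, hg0]
  have hv0 : v 0 = 1 := by simp [hv, hg0]
  have hs : ∀ t, |u t| ≤ 2 → |v t| ≤ 3 / 2 → SolvesAt u v t := by
    subst hu hv
    intro t h1 h2
    have h := hg t h1 h2
    exact ⟨h.fst, h.snd⟩
  have hstay := orbit_stays huc hvc hu0 hv0 hs
  have hsol : ∀ t, t < 0 → SolvesAt u v t := fun t ht =>
    hs t (hstay t ht).2.1.le (hstay t ht).2.2.le
  refine ⟨u, v, hu0, hv0, fun t ht => ?_, fun t ht => (hstay t ht).1,
    orbit_tendsto huc hvc hsol fun t ht => ?_⟩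
  · rcases ht.eq_or_lt with rfl | ht
    · exact ⟨hs 0 (by rw [hu0]; norm_num) (by rw [hv0]; norm_num), by rw [hv0]; norm_num⟩
    · exact ⟨hsol t ht, by linarith [(hstay t ht).1]⟩
  · have hE := energy_le_of_solves huc hvc ht.le fun s _ hs0 => ⟨hsol s hs0, (hstay s hs0).1⟩
    rw [hu0, hv0] at hE
    obtain ⟨h1, h2, h3⟩ := bounds_of_energy_le hE
    exact ⟨h1, h2, h3, (hstay t ht).1⟩

/- STATEMENT 5: The orbit of the sliding vector field Z̃_{α,β} through the fold
point (3β/2, 3β²/(8α)) converges backward in time to the pseudo-equilibrium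
(0,0), remaining in the sliding region Σˢ = {y < 3β²/(8α)} for all negative
times. -/
theorem sliding_orbit_backward_to_pseudoequilibrium (α β : ℝ) (hα : 0 < α) (hβ : 0 < β)
    (Zt : ℝ × ℝ → ℝ × ℝ)
    (hZt : ∀ p : ℝ × ℝ, Zt p =
      ((-(α * p.2)) / (3 * β ^ 2 / (4 * α) - p.2),
       (3 * β ^ 2 * p.1 / (8 * α) + β * p.2 / 8 - 3 * α * p.2 ^ 2 / β)
         / (3 * β ^ 2 / (4 * α) - p.2))) :
    ∃ f : ℝ → ℝ × ℝ,
      f 0 = (3 * β / 2, 3 * β ^ 2 / (8 * α)) ∧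
      (∀ t : ℝ, t ≤ 0 → HasDerivAt f (Zt (f t)) t) ∧
      (∀ t : ℝ, t < 0 → (f t).2 < 3 * β ^ 2 / (8 * α)) ∧
      Filter.Tendsto f Filter.atBot (nhds (0, 0)) := by
  obtain ⟨u, v, hu0, hv0, hsol, hv1, hut, hvt⟩ := exists_normalized_orbit
  have hc : 0 < 3 * β ^ 2 / (8 * α) := by positivity
  have hκ : 0 < α / (3 * β) := by positivity
  refine ⟨fun t => (3 * β / 2 * u (α / (3 * β) * t),
    3 * β ^ 2 / (8 * α) * v (α / (3 * β) * t)), by simp [hu0, hv0], fun t ht => ?_,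
    fun t ht => ?_, ?_⟩
  · obtain ⟨⟨hu, hv⟩, hlt⟩ := hsol (α / (3 * β) * t) (mul_nonpos_of_nonneg_of_nonpos hκ.le ht)
    have hlin : HasDerivAt (fun s => α / (3 * β) * s) (α / (3 * β)) t := by
      simpa using (hasDerivAt_id t).const_mul (α / (3 * β))
    rw [hZt]
    refine (((hu.comp t hlin).const_mul (3 * β / 2)).prodMk
      ((hv.comp t hlin).const_mul (3 * β ^ 2 / (8 * α)))).congr_deriv ?_
    have hne : 2 - v (α / (3 * β) * t) ≠ 0 := by linarith
    have hden : 3 * β ^ 2 / (4 * α) - 3 * β ^ 2 / (8 * α) * v (α / (3 * β) * t)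
        = 3 * β ^ 2 / (8 * α) * (2 - v (α / (3 * β) * t)) := by
      field_simp
      ring
    simp only [hden]
    generalize v (α / (3 * β) * t) = y at *
    generalize u (α / (3 * β) * t) = x at *
    ext
    · simp only
      field_simp
    · simp only
      field_simp
      ring
  · have := hv1 (α / (3 * β) * t) (mul_neg_of_pos_of_neg hκ ht)
    simpa using mul_lt_mul_of_pos_left this hc
  · have hlin : Tendsto (fun t : ℝ => α / (3 * β) * t) atBot atBot :=
      tendsto_id.const_mul_atBot hκ
    have h1 := (hut.comp hlin).const_mul (3 * β / 2)
    have h2 := (hvt.comp hlin).const_mul (3 * β ^ 2 / (8 * α))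
    rw [mul_zero] at h1 h2
    exact h1.prodMk_nhds h2
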